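/- Let L be one of the logics M5, MP5, M45, MP45, MD45, K45, KD45. Then the linear nested sequent calculus LNS_LConW is sound and complete for L: for every formula A, A ∈ L if and only if the linear nested sequent ⇒ A is derivable in LNS_LConW. -/

import Mathlib

/-- Monomodal formulas. -/
inductive Fm : Type
  | var : ℕ → Fm
  | bot : Fm
  | top : Fm
  | neg : Fm → Fm
  | and : Fm → Fm → Fm
  | or : Fm → Fm → Fm
  | imp : Fm → Fm → Fm
  | box : Fm → Fm

/-- Evaluation of the propositional structure of a formula under an assignment
`v` of truth values to formulas (only used on atoms, i.e. propositional
variables and boxed formulas). -/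
def evalP (v : Fm → Prop) : Fm → Prop
  | .var n => v (.var n)
  | .bot => False
  | .top => True
  | .neg A => ¬ evalP v A
  | .and A B => evalP v A ∧ evalP v B
  | .or A B => evalP v A ∨ evalP v B
  | .imp A B => evalP v A → evalP v B
  | .box A => v (.box A)

/-- `A` is an instance of a classical propositional tautology. -/
def Taut (A : Fm) : Prop := ∀ v, evalP v A

/-- A component of a (linear nested) sequent: a two-sided multiset sequent. -/
abbrev Cmp := Multiset Fm × Multiset Fm

/-- A set of additional axioms for monotone modal logic `M`, among
`C, N, P, D, T, 4, 5`. -/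
structure MAx where
  c : Bool := false
  n : Bool := false
  p : Bool := false
  d : Bool := false
  t : Bool := false
  four : Bool := false
  five : Bool := false

/-- Hilbert-style theoremhood in the extension `M𝒜` of monotone modal logic
`M` (classical propositional logic, the congruence rule and the axiom `M`)
with the axioms in `𝒜`. -/
inductive MThm (Ax : MAx) : Fm → Prop
  | taut {A} : Taut A → MThm Ax A
  | mp {A B} : MThm Ax (.imp A B) → MThm Ax A → MThm Ax B
  | cong {A B} : MThm Ax (.imp A B) → MThm Ax (.imp B A) →
      MThm Ax (.imp (.box A) (.box B))
  | axM {A B} : MThm Ax (.imp (.box (.and A B)) (.and (.box A) (.box B)))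
  | axC {A B} : Ax.c = true →
      MThm Ax (.imp (.and (.box A) (.box B)) (.box (.and A B)))
  | axN : Ax.n = true → MThm Ax (.box .top)
  | axP : Ax.p = true → MThm Ax (.neg (.box .bot))
  | axD {A} : Ax.d = true → MThm Ax (.neg (.and (.box A) (.box (.neg A))))
  | axT {A} : Ax.t = true → MThm Ax (.imp (.box A) A)
  | ax4 {A} : Ax.four = true → MThm Ax (.imp (.box A) (.box (.box A)))
  | ax5 {A} : Ax.five = true → MThm Ax (.or (.box A) (.box (.neg (.box A))))

/-- A linear nested sequent of type `LNS^m`: a (nonempty) list of components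
joined by the nesting `⫽`, optionally terminated by a unary nesting
`⫽ᵐ Σ ⇒ Π`. -/
abbrev LNSm := List Cmp × Option Cmp

/-- The linear nested sequent calculus `LNS_M𝒜ConW` for extensions of
monotone modal logic: classical propositional rules applied in any component
(but not inside `⫽ᵐ`), internal weakening and contraction, the modal rules
`□_R^m` and `□_L^m`, and the structural rule corresponding to each axiom in
`𝒜` (the rule `N` also being present whenever `5 ∈ 𝒜`, since `N` is
derivable in `M5`). -/
inductive LM (Ax : MAx) : LNSm → Prop
  | init {pre post : List Cmp} {ep} {Γ Δ : Multiset Fm} {m : ℕ} :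
      LM Ax (pre ++ (Fm.var m ::ₘ Γ, Fm.var m ::ₘ Δ) :: post, ep)
  | botL {pre post ep Γ Δ} :
      LM Ax (pre ++ (Fm.bot ::ₘ Γ, Δ) :: post, ep)
  | topR {pre post ep Γ Δ} :
      LM Ax (pre ++ (Γ, Fm.top ::ₘ Δ) :: post, ep)
  | negL {pre post ep Γ Δ A} :
      LM Ax (pre ++ (Γ, A ::ₘ Δ) :: post, ep) →
      LM Ax (pre ++ (Fm.neg A ::ₘ Γ, Δ) :: post, ep)
  | negR {pre post ep Γ Δ A} :
      LM Ax (pre ++ (A ::ₘ Γ, Δ) :: post, ep) →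
      LM Ax (pre ++ (Γ, Fm.neg A ::ₘ Δ) :: post, ep)
  | andL {pre post ep Γ Δ A B} :
      LM Ax (pre ++ (A ::ₘ B ::ₘ Γ, Δ) :: post, ep) →
      LM Ax (pre ++ (Fm.and A B ::ₘ Γ, Δ) :: post, ep)
  | andR {pre post ep Γ Δ A B} :
      LM Ax (pre ++ (Γ, A ::ₘ Δ) :: post, ep) →
      LM Ax (pre ++ (Γ, B ::ₘ Δ) :: post, ep) →
      LM Ax (pre ++ (Γ, Fm.and A B ::ₘ Δ) :: post, ep)
  | orL {pre post ep Γ Δ A B} :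
      LM Ax (pre ++ (A ::ₘ Γ, Δ) :: post, ep) →
      LM Ax (pre ++ (B ::ₘ Γ, Δ) :: post, ep) →
      LM Ax (pre ++ (Fm.or A B ::ₘ Γ, Δ) :: post, ep)
  | orR {pre post ep Γ Δ A B} :
      LM Ax (pre ++ (Γ, A ::ₘ B ::ₘ Δ) :: post, ep) →
      LM Ax (pre ++ (Γ, Fm.or A B ::ₘ Δ) :: post, ep)
  | impL {pre post ep Γ Δ A B} :
      LM Ax (pre ++ (B ::ₘ Γ, Δ) :: post, ep) →
      LM Ax (pre ++ (Γ, A ::ₘ Δ) :: post, ep) →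
      LM Ax (pre ++ (Fm.imp A B ::ₘ Γ, Δ) :: post, ep)
  | impR {pre post ep Γ Δ A B} :
      LM Ax (pre ++ (A ::ₘ Γ, B ::ₘ Δ) :: post, ep) →
      LM Ax (pre ++ (Γ, Fm.imp A B ::ₘ Δ) :: post, ep)
  | wkL {pre post ep Γ Δ A} :
      LM Ax (pre ++ (Γ, Δ) :: post, ep) →
      LM Ax (pre ++ (A ::ₘ Γ, Δ) :: post, ep)
  | wkR {pre post ep Γ Δ A} :
      LM Ax (pre ++ (Γ, Δ) :: post, ep) →
      LM Ax (pre ++ (Γ, A ::ₘ Δ) :: post, ep)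
  | conL {pre post ep Γ Δ A} :
      LM Ax (pre ++ (A ::ₘ A ::ₘ Γ, Δ) :: post, ep) →
      LM Ax (pre ++ (A ::ₘ Γ, Δ) :: post, ep)
  | conR {pre post ep Γ Δ A} :
      LM Ax (pre ++ (Γ, A ::ₘ A ::ₘ Δ) :: post, ep) →
      LM Ax (pre ++ (Γ, A ::ₘ Δ) :: post, ep)
  | boxRm {G Γ Δ B} :
      LM Ax (G ++ [(Γ, Δ)], some (0, {B})) →
      LM Ax (G ++ [(Γ, Fm.box B ::ₘ Δ)], none)
  | boxLm {G Γ Δ Sg Pp A} :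
      LM Ax (G ++ [(Γ, Δ), (A ::ₘ Sg, Pp)], none) →
      LM Ax (G ++ [(Fm.box A ::ₘ Γ, Δ)], some (Sg, Pp))
  | ruleC {c G Γ Δ} : Ax.c = true →
      LM Ax (c :: G, some (Γ, Δ)) →
      LM Ax ((c :: G) ++ [(Γ, Δ)], none)
  | ruleN {c G Γ Δ} : (Ax.n = true ∨ Ax.five = true) →
      LM Ax ((c :: G) ++ [(Γ, Δ)], none) →
      LM Ax (c :: G, some (Γ, Δ))
  | ruleP {G Γ Δ} : Ax.p = true →
      LM Ax (G ++ [(Γ, Δ)], some (0, 0)) →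
      LM Ax (G ++ [(Γ, Δ)], none)
  | ruleD {G Γ Δ A} : Ax.d = true →
      LM Ax (G ++ [(Γ, Δ)], some ({A}, 0)) →
      LM Ax (G ++ [(Fm.box A ::ₘ Γ, Δ)], none)
  | ruleT {G Γ Δ Sg Pp} : Ax.t = true →
      LM Ax (G ++ [(Γ, Δ)], some (Sg, Pp)) →
      LM Ax (G ++ [(Γ + Sg, Δ + Pp)], none)
  | rule4 {G Γ Δ Sg Pp A} : Ax.four = true →
      LM Ax (G ++ [(Γ, Δ), (Fm.box A ::ₘ Sg, Pp)], none) →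
      LM Ax (G ++ [(Fm.box A ::ₘ Γ, Δ)], some (Sg, Pp))
  | rule5 {G Γ Δ Sg Pp A} : Ax.five = true →
      LM Ax (G ++ [(Γ, Δ), (Sg, Fm.box A ::ₘ Pp)], none) →
      LM Ax (G ++ [(Γ, Fm.box A ::ₘ Δ)], some (Sg, Pp))

/-- The additional axioms of the logic `M5`. -/
def axM5 : MAx := { five := true }
/-- The additional axioms of the logic `MP5`. -/
def axMP5 : MAx := { p := true, five := true }
/-- The additional axioms of the logic `M45`. -/
def axM45 : MAx := { four := true, five := true }
/-- The additional axioms of the logic `MP45`. -/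
def axMP45 : MAx := { p := true, four := true, five := true }
/-- The additional axioms of the logic `MD45`. -/
def axMD45 : MAx := { d := true, four := true, five := true }
/-- The additional axioms of the logic `K45 = MNC45`. -/
def axK45 : MAx := { c := true, n := true, four := true, five := true }
/-- The additional axioms of the logic `KD45 = MNCD45`. -/
def axKD45 : MAx := { c := true, n := true, d := true, four := true, five := true }

/-!
Completeness rests on cut elimination. The modal rules and structural rules of the linear nested
sequent calculus are packed into single steps of a tableau calculus on sets of signed formulas: a
step passes to a premise consisting of at most one head `FB`, coming from some `F□B`, and of side
formulas that descend from boxed formulas of the conclusion; without `C` there is at most one side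
formula in each slot. In the principal case of a cut on `□C`, the formula `F□C` may, because of `5`,
also occur among the side formulas of its own step. It is then replaced by the formulas that
accompany `T□C` in the conclusion of the other step. These persist into the next component: a boxed
head does so by `5`, and with several side formulas, which takes `C` or `D`, there is also `4`.
Without `4`, the formula `T□C` cannot persist and has to be cut against `FC` directly. The Hilbert
axioms are refutable in this calculus, cut simulates modus ponens, and each step unfolds into rules
of the linear nested sequent calculus, `5` providing the rule `N`.

For soundness, a derivable linear nested sequent has a derivable component if `C` is absent, while
with `C` the components are read as nested boxes.
-/

/-! ### Premises of the modal rules -/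

/-- A formula with a sign: `(true, A)` is an occurrence of `A` to the left of `⇒`, and `(false, A)`
one to the right. -/
abbrev Signed : Type := Bool × Fm

/-- The formulas that are atomic for propositional logic. -/
def Fm.IsAtom : Fm → Prop
  | .var _ => True
  | .box _ => True
  | _ => False

namespace Signed

/-- The alternatives produced by the classical tableau rule for a signed formula, each alternative
being a list of signed formulas. An atom has one alternative, which is empty. -/
def branches : Signed → List (List Signed)
  | (_, .var _) => [[]]
  | (_, .box _) => [[]]
  | (true, .bot) => []
  | (false, .bot) => [[]]
  | (true, .top) => [[]]
  | (false, .top) => []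
  | (b, .neg A) => [[(!b, A)]]
  | (true, .and A B) => [[(true, A), (true, B)]]
  | (false, .and A B) => [[(false, A)], [(false, B)]]
  | (true, .or A B) => [[(true, A)], [(true, B)]]
  | (false, .or A B) => [[(false, A), (false, B)]]
  | (true, .imp A B) => [[(true, B)], [(false, A)]]
  | (false, .imp A B) => [[(true, A), (false, B)]]

/-- Truth of a signed formula under an assignment to the atoms. -/
def Sat (v : Fm → Prop) : Signed → Prop
  | (true, A) => evalP v A
  | (false, A) => ¬ evalP v A

theorem sum_sizeOf_lt_of_mem_branches {s : Signed} {b : List Signed} (hb : b ∈ s.branches) :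
    (b.map fun x ↦ sizeOf x.2).sum < sizeOf s.2 := by
  obtain ⟨_ | _, A⟩ := s <;> cases A <;> simp only [branches, List.mem_cons, List.not_mem_nil,
    or_false] at hb <;> (try rcases hb with rfl | rfl) <;> simp <;> omega

theorem sat_of_mem_branches {v : Fm → Prop} {s : Signed} (hs : ¬ s.2.IsAtom) {b : List Signed}
    (hb : b ∈ s.branches) (h : ∀ x ∈ b, Sat v x) : Sat v s := by
  obtain ⟨_ | _, A⟩ := s <;> cases A <;> simp only [branches, List.mem_cons, List.not_mem_nil,
    or_false, Fm.IsAtom, not_true_eq_false] at hb hs <;> (try rcases hb with rfl | rfl) <;>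
    simp_all [Sat, evalP]

theorem exists_conjugate_of_mem_branches {A : Fm} (hA : ¬ A.IsAtom) {b b' : List Signed}
    (hb : b ∈ branches (true, A)) (hb' : b' ∈ branches (false, A)) :
    ∃ B, sizeOf B < sizeOf A ∧
      ((true, B) ∈ b ∧ (false, B) ∈ b' ∨ (false, B) ∈ b ∧ (true, B) ∈ b') := by
  cases A with
  | var | box => exact absurd trivial hA
  | bot | top => simp [branches] at hb hb'
  | neg A =>
    simp only [branches, List.mem_singleton] at hb hb'
    subst hb hb'
    exact ⟨A, by simp, by simp⟩
  | and A B | or A B | imp A B =>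
    simp only [branches, List.mem_cons, List.not_mem_nil, or_false] at hb hb'
    have hA : sizeOf A < 1 + sizeOf A + sizeOf B := by omega
    rcases hb with rfl | rfl <;> rcases hb' with rfl | rfl <;>
      first
        | refine ⟨A, by simpa using hA, ?_⟩; simp; done
        | refine ⟨B, by simp, ?_⟩; simp

end Signed

section Premises

/-- The size restriction on a set of side formulas: at most one of them in the absence of `C`. -/
def Narrow (Ax : MAx) (Q : Set Signed) : Prop := Ax.c = false → Q.Subsingleton

/-- `Descends Ax S s` says that `s` arises by moving one boxed formula of `S` into the next
component, by `□_L` (`unbox`) or by the rules `4` and `5` (`keep`). -/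
inductive Descends (Ax : MAx) (S : Set Signed) : Signed → Prop
  | unbox {A} : (true, Fm.box A) ∈ S → Descends Ax S (true, A)
  | keep {b A} : (b = true → Ax.four = true) → (b, Fm.box A) ∈ S → Descends Ax S (b, Fm.box A)

/-- The formulas available as side formulas in the next component. -/
def descendants (Ax : MAx) (S : Set Signed) : Set Signed := {s | Descends Ax S s}

/-- The formulas that `□_R` can place in the next component. -/
def heads (S : Set Signed) : Set Signed := {s | ∃ B, s = (false, B) ∧ (false, Fm.box B) ∈ S}

/-- The premises of the modal rules, given the heads `H` and the side formulas `D` that the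
conclusion offers. The sets `H` and `D` are kept abstract because cut elimination has to consider
premises that use the cut formula in addition to what the conclusion offers. -/
inductive Premise (Ax : MAx) (H D : Set Signed) : Set Signed → Prop
  | box {u Q} : u ∈ H → Q ⊆ D → Narrow Ax Q → Premise Ax H D (insert u Q)
  | p {Q} : Ax.p = true → Q ⊆ D → Narrow Ax Q → Premise Ax H D Q
  | d {U Q} : Ax.d = true → U ⊆ D → Narrow Ax U → Q ⊆ D → Narrow Ax Q → Premise Ax H D (U ∪ Q)

/-- `Step Ax P S` says that a modal rule leads from the premise `P` to the conclusion `S`. -/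
def Step (Ax : MAx) (P S : Set Signed) : Prop := Premise Ax (heads S) (descendants Ax S) P

variable {Ax : MAx} {S S' P Q R D H X : Set Signed} {s x : Signed} {A C : Fm}

theorem narrow_empty : Narrow Ax ∅ := fun _ ↦ Set.subsingleton_empty

theorem narrow_singleton : Narrow Ax {s} := fun _ ↦ Set.subsingleton_singleton

theorem Narrow.mono (hQ : Narrow Ax Q) (h : R ⊆ Q) : Narrow Ax R := fun hc ↦ (hQ hc).anti h

theorem Narrow.sdiff_union (hQ : Narrow Ax Q) (hs : s ∈ Q) (hR : Narrow Ax R) :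
    Narrow Ax (Q \ {s} ∪ R) := by
  intro hc
  have hQs : Q \ {s} = ∅ := Set.sdiff_eq_empty.2 fun x hx ↦ hQ hc hx hs
  simpa [hQs] using hR hc

theorem Narrow.exists_replace (hX : Narrow Ax X) (hXD : X ⊆ insert x D) (hR : Narrow Ax R)
    (hRD : R ⊆ D) :
    ∃ X' ⊆ D, Narrow Ax X' ∧ X ⊆ insert x X' ∧ (X ⊆ X' ∨ R ⊆ X') := by
  by_cases hx : x ∈ X
  · refine ⟨X \ {x} ∪ R, Set.union_subset ?_ hRD, hX.sdiff_union hx hR, ?_,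
      .inr Set.subset_union_right⟩
    · exact Set.sdiff_singleton_subset_iff.2 hXD
    · exact Set.sdiff_singleton_subset_iff.1 Set.subset_union_left
  · exact ⟨X, (Set.subset_insert_iff_of_notMem hx).1 hXD, hX, Set.subset_insert _ _, .inl le_rfl⟩

theorem descendants_mono (h : ∀ b A, (b, Fm.box A) ∈ S → (b, Fm.box A) ∈ S') :
    descendants Ax S ⊆ descendants Ax S' := by
  rintro _ (hA | ⟨h4, hA⟩)
  · exact .unbox (h _ _ hA)
  · exact .keep h4 (h _ _ hA)

theorem heads_mono (h : ∀ b A, (b, Fm.box A) ∈ S → (b, Fm.box A) ∈ S') : heads S ⊆ heads S' := by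
  rintro _ ⟨B, rfl, hB⟩
  exact ⟨B, rfl, h _ _ hB⟩

theorem heads_insert_true : heads (insert (true, A) S) ⊆ heads S := by
  rintro _ ⟨B, rfl, hB⟩
  exact ⟨B, rfl, by simpa using hB⟩

theorem heads_insert_false_box :
    heads (insert (false, .box C) S) ⊆ insert (false, C) (heads S) := by
  rintro _ ⟨B, rfl, hB | hB⟩
  · cases hB
    exact .inl rfl
  · exact .inr ⟨B, rfl, hB⟩

theorem descendants_insert_false_box :
    descendants Ax (insert (false, .box C) S) ⊆ insert (false, .box C) (descendants Ax S) := by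
  rintro _ ((hA | hA) | ⟨h4, hA | hA⟩)
  · cases hA
  · exact .inr (.unbox hA)
  · exact .inl hA
  · exact .inr (.keep h4 hA)

theorem descendants_insert_true_box :
    descendants Ax (insert (true, .box C) S) ⊆
      insert (true, .box C) (insert (true, C) (descendants Ax S)) := by
  rintro _ ((hA | hA) | ⟨h4, hA | hA⟩)
  · cases hA
    exact .inr (.inl rfl)
  · exact .inr (.inr (.unbox hA))
  · exact .inl hA
  · exact .inr (.inr (.keep h4 hA))

theorem descendants_insert_true_box_of_not_four (h4 : Ax.four ≠ true) :
    descendants Ax (insert (true, .box C) S) ⊆ insert (true, C) (descendants Ax S) := by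
  rintro _ ((hA | hA) | ⟨hf, hA | hA⟩)
  · cases hA
    exact .inl rfl
  · exact .inr (.unbox hA)
  · cases hA
    exact absurd (hf rfl) h4
  · exact .inr (.keep hf hA)

/-- The signed formulas that persist unchanged into the next component. -/
def persistent (Ax : MAx) : Set Signed := {s | (s.1 = true → Ax.four = true) ∧ ∃ A, s.2 = .box A}

theorem subset_descendants (h : Q ⊆ persistent Ax) (hQ : Q ⊆ S) : Q ⊆ descendants Ax S := by
  rintro ⟨b, A⟩ hs
  obtain ⟨h4, B, hB⟩ := h hs
  cases hB
  exact .keep h4 (hQ hs)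

theorem exists_sources (hQ : Q ⊆ descendants Ax S) (hs : Narrow Ax Q) :
    ∃ T ⊆ S, Narrow Ax T ∧ (Ax.four = true → T ⊆ persistent Ax) ∧ Q ⊆ descendants Ax T := by
  have source : ∀ s ∈ Q, ∃ t ∈ S, (∃ A, t.2 = .box A) ∧ s ∈ descendants Ax {t} := by
    intro s hs
    rcases hQ hs with hA | ⟨h4, hA⟩
    · exact ⟨_, hA, ⟨_, rfl⟩, .unbox rfl⟩
    · exact ⟨_, hA, ⟨_, rfl⟩, .keep h4 rfl⟩
  choose! f hfS hfbox hf using source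
  refine ⟨f '' Q, Set.image_subset_iff.2 hfS, fun hc ↦ (hs hc).image f, ?_, fun s hs ↦ ?_⟩
  · rintro h4 _ ⟨s, hs, rfl⟩
    exact ⟨fun _ ↦ h4, hfbox s hs⟩
  · refine descendants_mono (fun b A h ↦ ?_) (hf s hs)
    exact h ▸ Set.mem_image_of_mem f hs

theorem Premise.mono {H' D' : Set Signed} (h : Premise Ax H D P) (hH : H ⊆ H') (hD : D ⊆ D') :
    Premise Ax H' D' P := by
  cases h with
  | box hu hQ hs => exact .box (hH hu) (hQ.trans hD) hs
  | p hp hQ hs => exact .p hp (hQ.trans hD) hs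
  | d hd hU hUs hQ hQs => exact .d hd (hU.trans hD) hUs (hQ.trans hD) hQs

theorem Step.of_boxes (h : Step Ax P S) (hS : ∀ b A, (b, Fm.box A) ∈ S → (b, Fm.box A) ∈ S') :
    Step Ax P S' :=
  Premise.mono h (heads_mono hS) (descendants_mono hS)

theorem Step.mono (h : Step Ax P S) (hS : S ⊆ S') : Step Ax P S' := h.of_boxes fun _ _ hA ↦ hS hA

theorem Step.of_subset_insert (h : Step Ax P S) (hs : ∀ A, s.2 ≠ .box A) (hS : S ⊆ insert s S') :
    Step Ax P S' :=
  h.of_boxes fun _ A hA ↦ (hS hA).resolve_left fun e ↦ hs A (e ▸ rfl)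

theorem Step.exists_minimal (hc : Ax.c = true → Ax.four = true)
    (hd : Ax.d = true → Ax.four = true) (h : Step Ax P S) :
    ∃ W ⊆ S, Step Ax P W ∧ ∀ C, (true, Fm.box C) ∈ W →
      Narrow Ax (W \ {(true, .box C)}) ∧ W \ {(true, .box C)} ⊆ persistent Ax := by
  have narrow_diff {T : Set Signed} {t : Signed} (hT : Narrow Ax T) (ht : t ∈ T) :
      Narrow Ax (T \ {t}) ∧ ((Ax.four = true → T ⊆ persistent Ax) → T \ {t} ⊆ persistent Ax) := by
    refine ⟨hT.mono Set.sdiff_subset, fun hT4 x hx ↦ ?_⟩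
    cases hAx : Ax.c with
    | false => exact absurd (hT hAx hx.1 ht) hx.2
    | true => exact hT4 (hc hAx) hx.1
  cases h with
  | @box _ Q hB hQ hQs =>
    obtain ⟨B, rfl, hB⟩ := hB
    obtain ⟨T, hTS, hTs, hT4, hQT⟩ := exists_sources hQ hQs
    refine ⟨insert (false, .box B) T, Set.insert_subset hB hTS,
      .box ⟨B, rfl, .inl rfl⟩ (hQT.trans (descendants_mono fun _ _ ↦ .inr)) hQs, fun C hC ↦ ?_⟩
    have hC : (true, .box C) ∈ T := by simpa using hC
    have hW : insert (false, .box B) T \ {(true, .box C)} =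
        insert (false, .box B) (T \ {(true, .box C)}) := Set.insert_sdiff_of_notMem _ (by simp)
    rw [hW]
    refine ⟨?_, Set.insert_subset ⟨nofun, B, rfl⟩ ((narrow_diff hTs hC).2 hT4)⟩
    simpa [Set.union_comm] using hTs.sdiff_union hC (narrow_singleton (s := (false, .box B)))
  | p hp hQ hQs =>
    obtain ⟨T, hTS, hTs, hT4, hQT⟩ := exists_sources hQ hQs
    exact ⟨T, hTS, .p hp hQT hQs, fun C hC ↦ (narrow_diff hTs hC).imp_right (· hT4)⟩
  | d hAx hU hUs hQ hQs =>
    obtain ⟨T, hTS, hTs, hT4, hUT⟩ := exists_sources hU hUs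
    obtain ⟨T', hTS', hTs', hT4', hQT⟩ := exists_sources hQ hQs
    refine ⟨T ∪ T', Set.union_subset hTS hTS', .d hAx (hUT.trans (descendants_mono fun _ _ ↦ .inl))
      hUs (hQT.trans (descendants_mono fun _ _ ↦ .inr)) hQs, fun C hC ↦ ⟨?_, ?_⟩⟩
    · rw [Set.union_sdiff_distrib]
      rcases hC with hC | hC
      · exact hTs.sdiff_union hC (hTs'.mono Set.sdiff_subset)
      · rw [Set.union_comm]
        exact hTs'.sdiff_union hC (hTs.mono Set.sdiff_subset)
    · exact Set.sdiff_subset.trans (Set.union_subset (hT4 (hd hAx)) (hT4' (hd hAx)))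

end Premises

/-! ### Cut elimination -/

/-- The tableau calculus on which cut is eliminated: `Refutable Ax S` says that the sequent with the
signed formulas `S` is derivable. Weakening and contraction are absorbed by the use of sets. -/
inductive Refutable (Ax : MAx) : Set Signed → Prop
  | conflict {S m} : (true, Fm.var m) ∈ S → (false, Fm.var m) ∈ S → Refutable Ax S
  | prop {S s} : s ∈ S → (∀ b ∈ s.branches, Refutable Ax (S ∪ {x | x ∈ b})) → Refutable Ax S
  | modal {P S} : Step Ax P S → Refutable Ax P → Refutable Ax S

/-- Admissibility of the cuts with cut formula `A`. -/
def CutAdmissible (Ax : MAx) (A : Fm) : Prop :=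
  ∀ S, Refutable Ax (insert (true, A) S) → Refutable Ax (insert (false, A) S) → Refutable Ax S

section Cut

variable {Ax : MAx} {S P P₁ P₂ Q R D H X : Set Signed} {s x : Signed} {A C : Fm}

theorem Refutable.mono (h : Refutable Ax S) (hS : S ⊆ X) : Refutable Ax X := by
  induction h generalizing X with
  | conflict hT hF => exact .conflict (hS hT) (hS hF)
  | prop hs _ ih => exact .prop (hS hs) fun b hb ↦ ih b hb (Set.union_subset_union_left _ hS)
  | modal hP hd _ => exact .modal (hP.mono hS) hd

/-- Eliminating a signed formula `s` from a refutation. The upward closed condition `M` on the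
remaining formulas has to make up for the steps in which `s` is principal. -/
theorem Refutable.eliminate {M : Set Signed → Prop} (hM : Monotone M)
    (hinit : ∀ m S, s.2 = .var m → (!s.1, .var m) ∈ S → M S → Refutable Ax S)
    (hprop : ∃ b ∈ s.branches, ∀ S, M S → {x | x ∈ b} ⊆ S)
    (hmodal : ∀ P S, Step Ax P (insert s S) → Refutable Ax P →
      (∀ X, P ⊆ insert s X → M X → Refutable Ax X) → M S → Refutable Ax S)
    (h : Refutable Ax S) (hS : S ⊆ insert s X) (hX : M X) : Refutable Ax X := by
  induction h generalizing X with
  | @conflict _ m hT hF =>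
    rcases hS hT with rfl | hT
    · exact hinit m X rfl ((hS hF).resolve_left (by simp)) hX
    · rcases hS hF with rfl | hF
      · exact hinit m X rfl hT hX
      · exact .conflict hT hF
  | prop hs _ ih =>
    rcases hS hs with rfl | hs
    · obtain ⟨b, hb, hbM⟩ := hprop
      exact ih b hb (Set.union_subset hS ((hbM X hX).trans (Set.subset_insert _ _))) hX
    · refine .prop hs fun b hb ↦ ih b hb ?_ (hM Set.subset_union_left hX)
      rw [← Set.insert_union]
      exact Set.union_subset_union_left _ hS
  | modal hP hd ih => exact hmodal _ _ (hP.mono hS) hd (fun _ ↦ ih) hX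

theorem Refutable.invert {b : List Signed} (hs : ¬ s.2.IsAtom) (hb : b ∈ s.branches)
    (h : Refutable Ax (insert s S)) : Refutable Ax (S ∪ {x | x ∈ b}) := by
  refine h.eliminate (M := ({x | x ∈ b} ⊆ ·)) (fun _ _ hX hb ↦ hb.trans hX) ?_ ⟨b, hb, fun _ ↦ id⟩
    ?_ (Set.insert_subset_insert Set.subset_union_left) Set.subset_union_right
  · rintro m _ hm
    exact absurd (hm ▸ trivial) hs
  · intro P X hP hd _ _
    exact .modal (hP.of_subset_insert (fun A hA ↦ hs (hA ▸ trivial)) le_rfl) hd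

theorem cutAdmissible_var (m : ℕ) : CutAdmissible Ax (.var m) := by
  intro S hT hF
  refine hT.eliminate (M := fun S ↦ Refutable Ax (insert (false, .var m) S))
    (fun _ _ hX hF ↦ hF.mono (Set.insert_subset_insert hX)) ?_
    ⟨[], by simp [Signed.branches], by simp⟩ ?_ le_rfl hF
  · rintro _ S hm hmem hF
    cases hm
    exact Set.insert_eq_of_mem hmem ▸ hF
  · intro P X hP hd _ _
    exact .modal (hP.of_subset_insert (by simp) le_rfl) hd

/-- Replacing a side formula `x` by the side formulas `R` in every slot of a premise. -/
theorem Premise.replace (h : Premise Ax H (insert x D) P) (hP : Refutable Ax P)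
    (hR : Narrow Ax R) (hRD : R ⊆ D)
    (hcut : ∀ X, R ⊆ X → P ⊆ insert x X → Refutable Ax X) :
    ∃ P', Premise Ax H D P' ∧ Refutable Ax P' := by
  have refutable {X : Set Signed} (hPX : P ⊆ insert x X) (hX : P ⊆ X ∨ R ⊆ X) : Refutable Ax X :=
    hX.elim hP.mono fun hRX ↦ hcut X hRX hPX
  cases h with
  | @box u Q hu hQ hQn =>
    obtain ⟨Q', hQ', hn, hsub, hor⟩ := hQn.exists_replace hQ hR hRD
    refine ⟨_, .box hu hQ' hn, refutable ?_ (hor.imp (Set.insert_subset_insert ·)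
      (·.trans (Set.subset_insert _ _)))⟩
    rw [Set.insert_comm]
    exact Set.insert_subset_insert hsub
  | p hp hQ hQn =>
    obtain ⟨Q', hQ', hn, hsub, hor⟩ := hQn.exists_replace hQ hR hRD
    exact ⟨_, .p hp hQ' hn, refutable hsub hor⟩
  | d hd hU hUn hQ hQn =>
    obtain ⟨U', hU', hUn', hsubU, horU⟩ := hUn.exists_replace hU hR hRD
    obtain ⟨Q', hQ', hQn', hsubQ, horQ⟩ := hQn.exists_replace hQ hR hRD
    refine ⟨_, .d hd hU' hUn' hQ' hQn', refutable ?_ ?_⟩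
    · rw [Set.insert_union_distrib]
      exact Set.union_subset_union hsubU hsubQ
    · rcases horU with horU | horU
      · exact horQ.imp (Set.union_subset_union horU) (Set.subset_union_of_subset_right · _)
      · exact .inr (Set.subset_union_of_subset_left horU _)

/-- The side formulas of a modal step can be traced back to few formulas of the conclusion, which
persist if `T□C` is among them. They take the place of `F□C` in the other premise of a cut. -/
theorem Step.residue (hc : Ax.c = true → Ax.four = true) (hd : Ax.d = true → Ax.four = true)
    (h : Step Ax P (insert (true, .box C) S)) (hP : Refutable Ax P) :
    Refutable Ax S ∨
      ∃ R ⊆ descendants Ax S, Narrow Ax R ∧ Refutable Ax (insert (true, .box C) R) := by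
  obtain ⟨W, hWS, hstep, hW⟩ := h.exists_minimal hc hd
  have hW' := Refutable.modal hstep hP
  by_cases hC : (true, .box C) ∈ W
  · obtain ⟨hn, hp⟩ := hW C hC
    refine .inr ⟨_, subset_descendants hp (Set.sdiff_singleton_subset_iff.2 hWS), hn, ?_⟩
    rwa [Set.insert_sdiff_singleton, Set.insert_eq_of_mem hC]
  · exact .inl (hW'.mono ((Set.subset_insert_iff_of_notMem hC).1 hWS))

theorem Step.split_head (h : Step Ax P (insert (false, .box C) S)) :
    Premise Ax (heads S) (insert (false, .box C) (descendants Ax S)) P ∨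
      ∃ Q, P = insert (false, C) Q ∧ Q ⊆ descendants Ax (insert (false, .box C) S) ∧
        Narrow Ax Q := by
  cases h with
  | box hu hQ hQn =>
    rcases heads_insert_false_box hu with rfl | hu
    · exact .inr ⟨_, rfl, hQ, hQn⟩
    · exact .inl (.box hu (hQ.trans descendants_insert_false_box) hQn)
  | p hp hQ hQn => exact .inl (.p hp (hQ.trans descendants_insert_false_box) hQn)
  | d hd hU hUn hQ hQn =>
    exact .inl (.d hd (hU.trans descendants_insert_false_box) hUn
      (hQ.trans descendants_insert_false_box) hQn)

/-- The principal case of cut: `insert (false, C) Q` is the premise of the step introducing `F□C`,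
and that step only needs the formulas `T` of the context. -/
theorem Step.cut_principal {T : Set Signed} (hC : CutAdmissible Ax C)
    (hQ : Q ⊆ descendants Ax S) (hQn : Narrow Ax Q) (hQC : Refutable Ax (insert (false, C) Q))
    (hTS : T ⊆ S) (hT : Narrow Ax T) (hT4 : Ax.four = true → T ⊆ persistent Ax)
    (h : Step Ax P (insert (true, .box C) S)) (hP : Refutable Ax P)
    (hcut : ∀ X, T ⊆ X → P ⊆ insert (true, .box C) X → Refutable Ax X) :
    Refutable Ax S := by
  have replaced : ∃ P', Premise Ax (heads S) (insert (true, C) (descendants Ax S)) P' ∧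
      Refutable Ax P' := by
    by_cases h4 : Ax.four = true
    · have hTD := subset_descendants (hT4 h4) hTS
      exact Premise.replace (Premise.mono h heads_insert_true descendants_insert_true_box) hP hT
        (hTD.trans (Set.subset_insert _ _)) hcut
    · exact ⟨P, Premise.mono h heads_insert_true (descendants_insert_true_box_of_not_four h4), hP⟩
  obtain ⟨P', hstep, hP'⟩ := replaced
  obtain ⟨P'', hstep', hP''⟩ := hstep.replace hP' hQn hQ fun X hQX hPX ↦
    hC X (hP'.mono hPX) (hQC.mono (Set.insert_subset_insert hQX))
  exact .modal hstep' hP''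

theorem Step.cut (hc : Ax.c = true → Ax.four = true) (hd : Ax.d = true → Ax.four = true)
    (hC : CutAdmissible Ax C)
    (h₁ : Step Ax P₁ (insert (false, .box C) S)) (hP₁ : Refutable Ax P₁)
    (h₂ : Step Ax P₂ (insert (true, .box C) S)) (hP₂ : Refutable Ax P₂)
    (hl : ∀ X, P₁ ⊆ insert (false, .box C) X → Refutable Ax (insert (true, .box C) X) →
      Refutable Ax X)
    (hr : ∀ X, P₂ ⊆ insert (true, .box C) X → Step Ax P₁ (insert (false, .box C) X) →
      Refutable Ax X) :
    Refutable Ax S := by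
  obtain hS | ⟨R, hRS, hRn, hR⟩ := h₂.residue hc hd hP₂
  · exact hS
  have cut_left (X : Set Signed) (hRX : R ⊆ X) (hX : P₁ ⊆ insert (false, .box C) X) :
      Refutable Ax X := hl X hX (hR.mono (Set.insert_subset_insert hRX))
  rcases h₁.split_head with hside | ⟨Q, rfl, hQ, hQn⟩
  · obtain ⟨P', hstep, hP'⟩ := hside.replace hP₁ hRn hRS cut_left
    exact .modal hstep hP'
  obtain ⟨T, hTS, hTn, hT4, hQT⟩ := exists_sources hQ hQn
  obtain ⟨Q', hQ'S, hQ'n, hQQ', hor⟩ :=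
    hQn.exists_replace (hQ.trans descendants_insert_false_box) hRn hRS
  have hQ'C : Refutable Ax (insert (false, C) Q') := by
    rcases hor with hor | hor
    · exact hP₁.mono (Set.insert_subset_insert hor)
    · refine cut_left _ (hor.trans (Set.subset_insert _ _)) ?_
      rw [Set.insert_comm]
      exact Set.insert_subset_insert hQQ'
  refine cut_principal (T := T \ {(false, .box C)}) hC hQ'S hQ'n hQ'C
    (Set.sdiff_singleton_subset_iff.2 hTS) (hTn.mono Set.sdiff_subset)
    (fun h4 ↦ Set.sdiff_subset.trans (hT4 h4)) h₂ hP₂ fun X hTX hX ↦ hr X hX ?_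
  refine .box ⟨C, rfl, .inl rfl⟩ (hQT.trans (descendants_mono fun _ _ hA ↦ ?_)) hQn
  exact Set.sdiff_singleton_subset_iff.1 hTX hA

theorem CutAdmissible.box (hc : Ax.c = true → Ax.four = true)
    (hd : Ax.d = true → Ax.four = true) (hC : CutAdmissible Ax C) :
    CutAdmissible Ax (.box C) := by
  intro S hT hF
  refine hF.eliminate (M := fun S ↦ Refutable Ax (insert (true, .box C) S))
    (fun _ _ hX hT ↦ hT.mono (Set.insert_subset_insert hX)) (by simp)
    ⟨[], by simp [Signed.branches], by simp⟩ (fun P₁ X h₁ hP₁ hl hT ↦ ?_) le_rfl hT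
  exact hT.eliminate (M := fun S ↦ Step Ax P₁ (insert (false, .box C) S))
    (fun _ _ hX h₁ ↦ h₁.mono (Set.insert_subset_insert hX)) (by simp)
    ⟨[], by simp [Signed.branches], by simp⟩
    (fun P₂ X h₂ hP₂ hr h₁ ↦ h₁.cut hc hd hC hP₁ h₂ hP₂ hl hr) le_rfl h₁

theorem CutAdmissible.resolve {A B : Fm} (hA : CutAdmissible Ax A) (hB : CutAdmissible Ax B)
    (a b : Bool) (h : Refutable Ax (S ∪ {x | x ∈ [(a, A), (b, B)]}))
    (hnA : Refutable Ax (S ∪ {x | x ∈ [(!a, A)]})) (hnB : Refutable Ax (S ∪ {x | x ∈ [(!b, B)]})) :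
    Refutable Ax S := by
  have cut {E : Fm} (hE : CutAdmissible Ax E) (e : Bool) {X : Set Signed}
      (he : Refutable Ax (insert (e, E) X)) (hne : Refutable Ax (insert (!e, E) X)) :
      Refutable Ax X := by
    cases e
    exacts [hE X hne he, hE X he hne]
  refine cut hA a (cut hB b (h.mono ?_) (hnB.mono ?_)) (hnA.mono ?_) <;>
    intro x <;> simp only [Set.mem_union, Set.mem_ofPred_eq, List.mem_cons, List.not_mem_nil,
      or_false, Set.mem_insert_iff] <;> tauto

theorem cutAdmissible (hc : Ax.c = true → Ax.four = true) (hd : Ax.d = true → Ax.four = true)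
    (A : Fm) : CutAdmissible Ax A := by
  induction A with
  | var m => exact cutAdmissible_var m
  | box C ih => exact ih.box hc hd
  | bot =>
    intro S _ hF
    simpa using hF.invert (b := []) id (by simp [Signed.branches])
  | top =>
    intro S hT _
    simpa using hT.invert (b := []) id (by simp [Signed.branches])
  | neg A ih =>
    intro S hT hF
    refine ih S ((hF.invert (b := [(true, A)]) id (by simp [Signed.branches])).mono ?_)
      ((hT.invert (b := [(false, A)]) id (by simp [Signed.branches])).mono ?_) <;>
      simp
  | and A B ihA ihB =>
    intro S hT hF
    refine ihA.resolve ihB true true (hT.invert id ?_) (hF.invert id ?_) (hF.invert id ?_) <;>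
      simp [Signed.branches]
  | or A B ihA ihB =>
    intro S hT hF
    refine ihA.resolve ihB false false (hF.invert id ?_) (hT.invert id ?_) (hT.invert id ?_) <;>
      simp [Signed.branches]
  | imp A B ihA ihB =>
    intro S hT hF
    refine ihA.resolve ihB true false (hF.invert id ?_) (hT.invert id ?_) (hT.invert id ?_) <;>
      simp [Signed.branches]

end Cut

/-! ### Refutability of the theorems -/

section Hilbert

variable {Ax : MAx} {S T : Set Signed} {s : Signed} {A B : Fm}

theorem Refutable.box_mono (h : Refutable Ax {(true, A), (false, B)}) (hA : (true, .box A) ∈ S)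
    (hB : (false, .box B) ∈ S) : Refutable Ax S := by
  refine .modal (.box (Q := {(true, A)}) ⟨B, rfl, hB⟩ ?_ narrow_singleton) ?_
  · exact Set.singleton_subset_iff.2 (.unbox hA)
  · rwa [Set.pair_comm]

theorem Refutable.of_branch {b : List Signed} (hs : s ∈ S) (hb : s.branches = [b])
    (h : Refutable Ax (S ∪ {x | x ∈ b})) : Refutable Ax S :=
  .prop hs (by simpa [hb] using h)

theorem Refutable.identity (A : Fm) (hT : (true, A) ∈ S) (hF : (false, A) ∈ S) :
    Refutable Ax S := by
  induction hn : sizeOf A using Nat.strong_induction_on generalizing A S with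
  | _ n ih =>
    subst hn
    by_cases hA : A.IsAtom
    · cases A with
      | var m => exact .conflict hT hF
      | box A => exact .box_mono (ih _ (by simp) A (by simp) (by simp) rfl) hT hF
      | _ => exact hA.elim
    · refine .prop hT fun b hb ↦ .prop (.inl hF) fun b' hb' ↦ ?_
      obtain ⟨B, hBA, ⟨hB, hB'⟩ | ⟨hB, hB'⟩⟩ := Signed.exists_conjugate_of_mem_branches hA hb hb'
      · exact ih _ hBA B (.inl (.inr hB)) (.inr hB') rfl
      · exact ih _ hBA B (.inr hB') (.inl (.inr hB)) rfl

theorem Refutable.of_unsat_atoms (hS : ∀ s ∈ S, s.2.IsAtom)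
    (h : ∀ v, ∃ s ∈ S, ¬ s.Sat v) : Refutable Ax S := by
  obtain ⟨⟨b, A⟩, hsS, hs⟩ := h fun a ↦ (true, a) ∈ S
  have hA : evalP (fun a ↦ (true, a) ∈ S) A ↔ (true, A) ∈ S := by
    have := hS _ hsS
    cases A with
    | var | box => rfl
    | _ => exact this.elim
  cases b
  · exact .identity A (by simpa [Signed.Sat, hA] using hs) hsS
  · exact absurd hsS (by simpa [Signed.Sat, hA] using hs)

/-- Completeness for propositional logic, by expanding the formulas of `l` one after the other. -/
theorem Refutable.of_unsat_union (l : List Signed) (hS : ∀ s ∈ S, s.2.IsAtom)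
    (h : ∀ v, ∃ s ∈ {x | x ∈ l} ∪ S, ¬ s.Sat v) (hT : {x | x ∈ l} ∪ S ⊆ T) : Refutable Ax T := by
  induction hn : (l.map fun x ↦ sizeOf x.2).sum using Nat.strong_induction_on
    generalizing l S T with
  | _ n ih =>
    subst hn
    cases l with
    | nil => exact (of_unsat_atoms hS (by simpa using h)).mono (by simpa using hT)
    | cons s l =>
      by_cases hs : s.2.IsAtom
      · have move : {x | x ∈ s :: l} ∪ S = {x | x ∈ l} ∪ insert s S := by
          ext x
          simp only [List.mem_cons, Set.mem_union, Set.mem_ofPred_eq, Set.mem_insert_iff]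
          tauto
        refine ih _ ?_ l (Set.forall_mem_insert.2 ⟨hs, hS⟩) (move ▸ h) (move ▸ hT) rfl
        have : 0 < sizeOf s.2 := by cases s.2 <;> simp
        simpa using this
      · refine .prop (hT (.inl List.mem_cons_self)) fun b hb ↦
          ih _ ?_ (b ++ l) hS (fun v ↦ ?_) ?_ rfl
        · have := Signed.sum_sizeOf_lt_of_mem_branches hb
          simpa using this
        · by_contra! hv
          obtain ⟨x, hx, hxv⟩ := h v
          have hsv : s.Sat v := Signed.sat_of_mem_branches hs hb fun y hy ↦ hv y (by simp [hy])
          rcases hx with hx | hx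
          · rcases List.mem_cons.1 hx with rfl | hx
            · exact hxv hsv
            · exact hxv (hv x (by simp [hx]))
          · exact hxv (hv x (.inr hx))
        · intro x hx
          have hxT := @hT x
          simp only [List.mem_append, List.mem_cons, Set.mem_union, Set.mem_ofPred_eq] at hx hxT ⊢
          tauto

theorem Refutable.of_unsat (l : List Signed) (h : ∀ v, ∃ s ∈ l, ¬ s.Sat v)
    (hl : {x | x ∈ l} ⊆ S) : Refutable Ax S :=
  of_unsat_union l (S := ∅) (by simp) (by simpa using h) (by simpa using hl)

theorem refutable_imp_iff :
    Refutable Ax {(false, .imp A B)} ↔ Refutable Ax {(true, A), (false, B)} := by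
  constructor <;> intro h
  · refine (Refutable.invert (S := ∅) (s := (false, .imp A B)) id (.head _)
      (h.mono (by simp))).mono ?_
    simp [Set.subset_def]
  · exact .of_branch rfl rfl (h.mono (by simp [Set.subset_def]))

theorem Refutable.mp (hc : Ax.c = true → Ax.four = true) (hd : Ax.d = true → Ax.four = true)
    (hAB : Refutable Ax {(false, .imp A B)}) (hA : Refutable Ax {(false, A)}) :
    Refutable Ax {(false, B)} := by
  refine cutAdmissible hc hd A _ ?_ (hA.mono (by simp))
  refine cutAdmissible hc hd (.imp A B) _ ?_ (hAB.mono (by simp))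
  refine .of_unsat [(true, .imp A B), (true, A), (false, B)] ?_ (by simp [Set.subset_def])
  intro v
  by_cases hA : evalP v A <;> simp [Signed.Sat, evalP, hA, em']

theorem refutable_axM :
    Refutable Ax {(false, .imp (.box (.and A B)) (.and (.box A) (.box B)))} := by
  refine refutable_imp_iff.2 (.prop (s := (false, .and (.box A) (.box B))) (by simp) fun b hb ↦ ?_)
  obtain ⟨E, hE, rfl⟩ : ∃ E ∈ [A, B], b = [(false, .box E)] := by
    simpa [Signed.branches] using hb
  refine .box_mono (A := .and A B) (B := E) ?_ (by simp) (by simp)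
  refine .of_unsat [(true, .and A B), (false, E)] (fun v ↦ ?_) (by simp [Set.subset_def])
  rcases List.mem_pair.1 hE with rfl | rfl <;> simp [Signed.Sat, evalP] <;> tauto

theorem refutable_axC (hc : Ax.c = true) :
    Refutable Ax {(false, .imp (.and (.box A) (.box B)) (.box (.and A B)))} := by
  refine refutable_imp_iff.2 (.of_branch (s := (true, .and (.box A) (.box B))) (by simp) rfl ?_)
  refine .modal (.box (Q := {(true, A), (true, B)}) ⟨.and A B, rfl, by simp⟩ ?_
    (by simp [Narrow, hc])) (.of_unsat [(true, A), (true, B), (false, .and A B)] ?_ ?_)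
  · rintro _ (rfl | rfl) <;> exact .unbox (by simp)
  · intro v
    by_cases hA : evalP v A <;> simp [Signed.Sat, evalP, hA, em']
  · simp [Set.subset_def]

theorem refutable_axD (hd : Ax.d = true) :
    Refutable Ax {(false, .neg (.and (.box A) (.box (.neg A))))} := by
  refine .of_branch rfl rfl (.of_branch (s := (true, .and (.box A) (.box (.neg A)))) (by simp) rfl
    ?_)
  refine .modal (.d (U := {(true, A)}) (Q := {(true, .neg A)}) hd ?_ narrow_singleton ?_
    narrow_singleton) (.of_unsat [(true, A), (true, .neg A)] ?_ (by simp [Set.subset_def]))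
  · exact Set.singleton_subset_iff.2 (.unbox (by simp))
  · exact Set.singleton_subset_iff.2 (.unbox (by simp))
  · simp [Signed.Sat, evalP, em']

theorem refutable_ax5 : Refutable Ax {(false, .or (.box A) (.box (.neg (.box A))))} := by
  refine .of_branch rfl rfl (.modal (.box (Q := {(false, .box A)})
    ⟨.neg (.box A), rfl, by simp⟩ ?_ narrow_singleton) ?_)
  · exact Set.singleton_subset_iff.2 (.keep (by simp) (by simp))
  · exact .of_branch (.inl rfl) rfl (.identity (.box A) (by simp) (by simp))

theorem MThm.refutable (hc : Ax.c = true → Ax.four = true) (hd : Ax.d = true → Ax.four = true)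
    (ht : Ax.t = false) (h : MThm Ax A) : Refutable Ax {(false, A)} := by
  induction h with
  | @taut A hA =>
    exact .of_unsat [(false, A)] (by simpa [Signed.Sat] using show ∀ v, evalP v A from hA) (by simp)
  | mp _ _ ihAB ihA => exact .mp hc hd ihAB ihA
  | cong _ _ ihAB =>
    exact refutable_imp_iff.2 (.box_mono (refutable_imp_iff.1 ihAB) (by simp) (by simp))
  | axM => exact refutable_axM
  | axC hc => exact refutable_axC hc
  | axN =>
    exact .modal (.box ⟨.top, rfl, Set.mem_singleton _⟩ (Set.empty_subset _) narrow_empty)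
      (.prop (.inl rfl) (by simp [Signed.branches]))
  | axP hp =>
    refine .of_branch rfl rfl (.modal (.p (Q := {(true, .bot)}) hp ?_ narrow_singleton)
      (.prop rfl (by simp [Signed.branches])))
    exact Set.singleton_subset_iff.2 (.unbox (by simp))
  | axD hd => exact refutable_axD hd
  | axT ht' => simp [ht] at ht'
  | @ax4 A h4 =>
    refine refutable_imp_iff.2 (.modal (.box (Q := {(true, .box A)}) ⟨.box A, rfl, by simp⟩ ?_
      narrow_singleton) (.identity (.box A) (by simp) (by simp)))
    exact Set.singleton_subset_iff.2 (.keep (fun _ ↦ h4) (by simp))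
  | ax5 => exact refutable_ax5

end Hilbert

/-! ### Derivability of refutable sequents -/

namespace Cmp

/-- The set of signed formulas occurring in a component. -/
def signed (c : Cmp) : Set Signed := {s | s.2 ∈ if s.1 then c.1 else c.2}

/-- Adding one occurrence of a signed formula to a component. -/
def add : Signed → Cmp → Cmp
  | (true, A), (Γ, Δ) => (A ::ₘ Γ, Δ)
  | (false, A), (Γ, Δ) => (Γ, A ::ₘ Δ)

theorem signed_add (s : Signed) (c : Cmp) : (add s c).signed = insert s c.signed := by
  obtain ⟨_ | _, A⟩ := s <;> ext ⟨_ | _, B⟩ <;> simp [signed, add]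

theorem signed_foldr_add (b : List Signed) (c : Cmp) :
    signed (b.foldr add c) = c.signed ∪ {x | x ∈ b} := by
  induction b with
  | nil => simp
  | cons s b ih =>
    ext x
    simp [signed_add, ih, or_left_comm]

theorem finite_signed (c : Cmp) : c.signed.Finite := by
  refine ((c.1.finite_toSet.image (Prod.mk true)).union
    (c.2.finite_toSet.image (Prod.mk false))).subset ?_
  rintro ⟨_ | _, A⟩ hA
  · exact .inr ⟨A, by simpa [signed] using hA, rfl⟩
  · exact .inl ⟨A, by simpa [signed] using hA, rfl⟩

end Cmp

theorem finite_descendants {Ax : MAx} {S : Set Signed} (hS : S.Finite) :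
    (descendants Ax S).Finite := by
  have box_injective : Function.Injective fun A ↦ (true, Fm.box A) := fun _ _ h ↦ by simpa using h
  refine (((hS.preimage box_injective.injOn).image (Prod.mk true)).union hS).subset ?_
  rintro _ (hA | ⟨_, hA⟩)
  · exact .inl ⟨_, hA, rfl⟩
  · exact .inr hA

section Derivations

variable {Ax : MAx} {G : List Cmp} {c e : Cmp} {ep : Option Cmp} {s : Signed}
  {P Q S U : Set Signed}

theorem LM.contract (hs : s ∈ c.signed) (h : LM Ax (G ++ [c.add s], ep)) :
    LM Ax (G ++ [c], ep) := by
  obtain ⟨Γ, Δ⟩ := c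
  obtain ⟨_ | _, A⟩ := s
  · obtain ⟨Δ, rfl⟩ := Multiset.exists_cons_of_mem (show A ∈ Δ by simpa [Cmp.signed] using hs)
    exact .conR h
  · obtain ⟨Γ, rfl⟩ := Multiset.exists_cons_of_mem (show A ∈ Γ by simpa [Cmp.signed] using hs)
    exact .conL h

theorem LM.expand (hs : s ∈ c.signed)
    (h : ∀ b ∈ s.branches, LM Ax (G ++ [b.foldr Cmp.add c], ep)) : LM Ax (G ++ [c], ep) := by
  obtain ⟨Γ, Δ⟩ := c
  obtain ⟨_ | _, A⟩ := s <;> cases A <;>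
    simp only [Signed.branches, List.forall_mem_cons, List.foldr_nil, List.foldr_cons] at h
  case false.var | false.box | true.var | true.box | false.bot | true.top => exact h.1
  case true.bot => exact .contract hs .botL
  case false.top => exact .contract hs .topR
  case true.neg => exact .contract hs (.negL h.1)
  case false.neg => exact .contract hs (.negR h.1)
  case true.and => exact .contract hs (.andL h.1)
  case false.and => exact .contract hs (.andR h.1 h.2.1)
  case true.or => exact .contract hs (.orL h.1 h.2.1)
  case false.or => exact .contract hs (.orR h.1)
  case true.imp => exact .contract hs (.impL h.1 h.2.1)
  case false.imp => exact .contract hs (.impR h.1)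

theorem LM.nestingC (hc : Ax.c = true) (h : LM Ax (G ++ [c], some e)) :
    LM Ax (G ++ [c, e], none) := by
  cases G with
  | nil => exact .ruleC (G := []) hc h
  | cons x G => simpa using LM.ruleC (c := x) (G := G ++ [c]) hc h

theorem LM.nestingN (hN : Ax.n = true ∨ Ax.five = true) (h : LM Ax (G ++ [c, e], none)) :
    LM Ax (G ++ [c], some e) := by
  cases G with
  | nil => exact .ruleN (G := []) hN h
  | cons x G => exact .ruleN (c := x) (G := G ++ [c]) hN (by simpa using h)

theorem LM.descend (h5 : Ax.five = true) (hs : s ∈ descendants Ax c.signed)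
    (h : LM Ax (G ++ [c, e.add s], none)) : LM Ax (G ++ [c], some e) := by
  obtain ⟨Γ, Δ⟩ := c
  rcases hs with hA | @⟨b, A, h4, hA⟩
  · exact .contract hA (.boxLm h)
  · cases b with
    | false => exact .contract hA (.rule5 h5 h)
    | true => exact .contract hA (.rule4 (h4 rfl) h)

theorem LM.descend_all (h5 : Ax.five = true) (hQ : Q ⊆ descendants Ax c.signed)
    (hQn : Narrow Ax Q) (h : ∀ e', e.signed ∪ Q ⊆ e'.signed → LM Ax (G ++ [c, e'], none)) :
    LM Ax (G ++ [c], some e) := by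
  cases hc : Ax.c with
  | false =>
    rcases (hQn hc).eq_empty_or_singleton with rfl | ⟨s, rfl⟩
    · exact .nestingN (.inr h5) (h e (by simp))
    · exact .descend h5 (hQ rfl) (h _ (by simp [Cmp.signed_add]))
  | true =>
    clear hQn
    induction Q, (finite_descendants c.finite_signed).subset hQ using Set.Finite.induction_on
      generalizing e with
    | empty => exact .nestingN (.inr h5) (h e (by simp))
    | @insert s Q _ _ ih =>
      refine .descend h5 (hQ (.inl rfl)) (.nestingC hc (ih ?_ fun e' he' ↦ h e' ?_))
      · exact (Set.subset_insert _ _).trans hQ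
      · rwa [Set.union_insert, ← Set.insert_union, ← Cmp.signed_add]

theorem LM.of_union (h5 : Ax.five = true) (hd : Ax.d = true)
    (hU : U ⊆ descendants Ax c.signed) (hUn : Narrow Ax U)
    (hQ : Q ⊆ descendants Ax c.signed) (hQn : Narrow Ax Q) (hUc : ¬ U ⊆ c.signed)
    (h : ∀ e, U ∪ Q ⊆ e.signed → LM Ax (G ++ [c, e], none)) : LM Ax (G ++ [c], none) := by
  obtain ⟨s, hs, hsc⟩ := Set.not_subset.1 hUc
  have hD : U \ {s} ∪ Q ⊆ descendants Ax c.signed :=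
    Set.union_subset (Set.sdiff_subset.trans hU) hQ
  have hn := hUn.sdiff_union hs hQn
  obtain ⟨Γ, Δ⟩ := c
  rcases hU hs with @⟨A, hA⟩ | ⟨_, hA⟩
  · refine .contract hA (.ruleD hd (.descend_all h5 hD hn fun e he ↦ h e (.trans ?_ he)))
    intro x hx
    by_cases hxA : x = (true, A)
    · exact .inl (by simp [hxA, Cmp.signed])
    · exact .inr (hx.imp_left fun hx ↦ ⟨hx, hxA⟩)
  · exact absurd hA hsc

theorem LM.of_step (h5 : Ax.five = true) (hstep : Step Ax P c.signed)
    (h : ∀ G e, P ⊆ e.signed → LM Ax (G ++ [e], none)) : LM Ax (G ++ [c], none) := by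
  have h' (e : Cmp) (he : P ⊆ e.signed) : LM Ax (G ++ [c, e], none) := by
    simpa using h (G ++ [c]) e he
  cases hstep with
  | box hu hQ hQn =>
    obtain ⟨B, rfl, hB⟩ := hu
    obtain ⟨Γ, Δ⟩ := c
    refine .contract hB (.boxRm (.descend_all h5 hQ hQn fun e he ↦ h' e (.trans ?_ he)))
    exact Set.insert_subset (.inl (by simp [Cmp.signed])) Set.subset_union_right
  | p hp hQ hQn =>
    exact .ruleP hp (.descend_all h5 hQ hQn fun e he ↦ h' e (Set.subset_union_right.trans he))
  | @d U Q hd hU hUn hQ hQn =>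
    by_cases hUc : U ⊆ c.signed
    · by_cases hQc : Q ⊆ c.signed
      · exact h G c (Set.union_subset hUc hQc)
      · exact .of_union h5 hd hQ hQn hU hUn hQc (Set.union_comm U Q ▸ h')
    · exact .of_union h5 hd hU hUn hQ hQn hUc h'

theorem Refutable.derivable (h5 : Ax.five = true) (h : Refutable Ax S) (G : List Cmp) (c : Cmp)
    (hS : S ⊆ c.signed) : LM Ax (G ++ [c], none) := by
  induction h generalizing G c with
  | @conflict S m hT hF =>
    obtain ⟨Γ, Δ⟩ := c
    obtain ⟨Γ, rfl⟩ := Multiset.exists_cons_of_mem (show .var m ∈ Γ from hS hT)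
    obtain ⟨Δ, rfl⟩ := Multiset.exists_cons_of_mem (show .var m ∈ Δ from hS hF)
    exact .init
  | prop hs _ ih =>
    refine .expand (hS hs) fun b hb ↦ ih b hb _ _ ?_
    rw [Cmp.signed_foldr_add]
    exact Set.union_subset_union_left _ hS
  | modal hP _ ih => exact .of_step h5 (hP.mono hS) ih

end Derivations

/-! ### Soundness -/

namespace MThm

variable {Ax : MAx} {A B C : Fm}

theorem of_taut_imp (h : MThm Ax A) (hAB : ∀ v, evalP v A → evalP v B) : MThm Ax B :=
  .mp (.taut fun v ↦ hAB v) h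

theorem of_taut_imp₂ (hA : MThm Ax A) (hB : MThm Ax B)
    (h : ∀ v, evalP v A → evalP v B → evalP v C) : MThm Ax C :=
  .mp (.mp (.taut (A := .imp A (.imp B C)) fun v ↦ h v) hA) hB

theorem box_mono (h : MThm Ax (.imp A B)) : MThm Ax (.imp (.box A) (.box B)) := by
  have hA : MThm Ax (.imp A (.and A B)) := h.of_taut_imp fun v ↦ by simp only [evalP]; tauto
  have hAB : MThm Ax (.imp (.and A B) A) := .taut fun v ↦ by simp only [evalP]; tauto
  exact of_taut_imp₂ (.cong hA hAB) (.axM (A := A) (B := B)) fun v ↦ by simp only [evalP]; tauto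

/-- Both disjuncts of axiom `5` are boxed, and hence imply `□⊤`. -/
theorem box_top (hN : Ax.n = true ∨ Ax.five = true) : MThm Ax (.box .top) := by
  rcases hN with hn | h5
  · exact .axN hn
  · have box_imp (A : Fm) : MThm Ax (.imp (.box A) (.box .top)) :=
      box_mono (.taut fun v ↦ by simp [evalP])
    refine .mp (of_taut_imp₂ (box_imp .bot) (box_imp (.neg (.box .bot))) ?_) (.ax5 (A := .bot) h5)
    intro v
    simp only [evalP]
    tauto

theorem nec (hN : Ax.n = true ∨ Ax.five = true) (h : MThm Ax A) : MThm Ax (.box A) :=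
  .mp (box_mono (h.of_taut_imp fun v ↦ by simp [evalP])) (box_top hN)

theorem box_mono₂ (hc : Ax.c = true) (h : MThm Ax (.imp A (.imp B C))) :
    MThm Ax (.imp (.box A) (.imp (.box B) (.box C))) := by
  have hAB : MThm Ax (.imp (.and A B) C) := h.of_taut_imp fun v ↦ by simp only [evalP]; tauto
  exact of_taut_imp₂ (.axC (A := A) (B := B) hc) hAB.box_mono fun v ↦ by
    simp only [evalP]; tauto

theorem neg_box_imp_box (h5 : Ax.five = true) :
    MThm Ax (.imp (.neg (.box A)) (.box (.neg (.box A)))) :=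
  (MThm.ax5 (A := A) h5).of_taut_imp fun v ↦ by simp only [evalP]; tauto

theorem neg_box (hp : Ax.p = true) (h : MThm Ax (.neg A)) : MThm Ax (.neg (.box A)) := by
  have hA : MThm Ax (.imp A .bot) := h.of_taut_imp fun _ ↦ id
  exact of_taut_imp₂ (.axP hp) hA.box_mono fun v ↦ by simp only [evalP]; tauto

theorem box_imp_neg_box (hd : Ax.d = true) (h : MThm Ax (.imp B (.neg A))) :
    MThm Ax (.imp (.box B) (.neg (.box A))) :=
  of_taut_imp₂ (.axD (A := A) hd) h.box_mono fun v ↦ by simp only [evalP]; tauto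

end MThm

/-- The formula `φ₁ ∨ □(φ₂ ∨ □(⋯ ∨ □φₙ))`. -/
def nest : List Fm → Fm
  | [] => .bot
  | [φ] => φ
  | φ :: ψ :: l => .or φ (.box (nest (ψ :: l)))

/-- The meaning of a linear nested sequent with components `l`: the usual formula interpretation in
the presence of `C`, and derivability of one of the components otherwise. -/
def Interp (Ax : MAx) (l : List Fm) : Prop :=
  if Ax.c = true then MThm Ax (nest l) else ∃ φ ∈ l, MThm Ax φ

section Interp

variable {Ax : MAx} {pre post l l' : List Fm} {α β φ φ₁ φ₂ ψ χ χ' : Fm}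

theorem nest_cons (hl : l ≠ []) : nest (φ :: l) = .or φ (.box (nest l)) := by
  cases l with
  | nil => exact absurd rfl hl
  | cons => rfl

theorem interp_of_c (hc : Ax.c = true) : Interp Ax l ↔ MThm Ax (nest l) := by simp [Interp, hc]

theorem interp_of_not_c (hc : Ax.c = false) : Interp Ax l ↔ ∃ φ ∈ l, MThm Ax φ := by
  simp [Interp, hc]

theorem nest_append_mono (hl : l ≠ []) (hl' : l' ≠ []) (h : MThm Ax (.imp (nest l) (nest l'))) :
    MThm Ax (.imp (nest (pre ++ l)) (nest (pre ++ l'))) := by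
  induction pre with
  | nil => exact h
  | cons χ pre ih =>
    rw [List.cons_append, List.cons_append, nest_cons (by simp [hl]), nest_cons (by simp [hl'])]
    exact ih.box_mono.of_taut_imp fun v ↦ by simp only [evalP]; tauto

theorem Interp.of_thm (hN : Ax.c = true → Ax.n = true ∨ Ax.five = true) (h : MThm Ax φ) :
    Interp Ax (pre ++ φ :: post) := by
  cases hc : Ax.c with
  | false => exact (interp_of_not_c hc).2 ⟨φ, by simp, h⟩
  | true =>
    rw [interp_of_c hc]
    induction pre with
    | nil =>
      cases post with
      | nil => exact h
      | cons => exact h.of_taut_imp fun v ↦ .inl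
    | cons χ pre ih =>
      rw [List.cons_append, nest_cons (by simp)]
      exact (ih.nec (hN hc)).of_taut_imp fun v ↦ .inr

theorem nest_map₂ (hc : Ax.c = true) (h : MThm Ax (.imp φ₁ (.imp φ₂ φ))) :
    MThm Ax (.imp (nest (pre ++ φ₁ :: post)) (.imp (nest (pre ++ φ₂ :: post))
      (nest (pre ++ φ :: post)))) := by
  induction pre with
  | nil =>
    cases post with
    | nil => exact h
    | cons => exact h.of_taut_imp fun v ↦ by simp only [List.nil_append, nest, evalP]; tauto
  | cons χ pre ih =>
    simp only [List.cons_append]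
    rw [nest_cons (by simp), nest_cons (by simp), nest_cons (by simp)]
    exact (MThm.box_mono₂ hc ih).of_taut_imp fun v ↦ by simp only [evalP]; tauto

theorem Interp.map₂ (h : MThm Ax (.imp φ₁ (.imp φ₂ φ))) (h₁ : Interp Ax (pre ++ φ₁ :: post))
    (h₂ : Interp Ax (pre ++ φ₂ :: post)) : Interp Ax (pre ++ φ :: post) := by
  cases hc : Ax.c with
  | true =>
    rw [interp_of_c hc] at *
    exact .mp (.mp (nest_map₂ hc h) h₁) h₂
  | false =>
    rw [interp_of_not_c hc] at *
    obtain ⟨ψ₁, hmem₁, hψ₁⟩ := h₁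
    obtain ⟨ψ₂, hmem₂, hψ₂⟩ := h₂
    have outside {ψ χ : Fm} (hψ : ψ ∈ pre ++ χ :: post) (hne : ψ ≠ χ) : ψ ∈ pre ++ φ :: post := by
      have := hψ
      simp only [List.mem_append, List.mem_cons] at this ⊢
      tauto
    by_cases he₁ : ψ₁ = φ₁
    · by_cases he₂ : ψ₂ = φ₂
      · subst he₁ he₂
        exact ⟨φ, by simp, .mp (.mp h hψ₁) hψ₂⟩
      · exact ⟨ψ₂, outside hmem₂ he₂, hψ₂⟩
    · exact ⟨ψ₁, outside hmem₁ he₁, hψ₁⟩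

theorem Interp.map (h : MThm Ax (.imp ψ φ)) (hψ : Interp Ax (pre ++ ψ :: post)) :
    Interp Ax (pre ++ φ :: post) :=
  .map₂ (h.of_taut_imp fun _ hv _ ↦ hv) hψ hψ

/-- Soundness of moving a formula into the last nesting: with `C`, the boxed formula `□α` is used
inside the box, and without `C`, the implication `α → φ` is itself derivable. -/
theorem Interp.collapse (hβ : MThm Ax (.imp β (.box α)))
    (hψ : ∀ v, evalP v ψ → evalP v α → evalP v φ)
    (hχ : ∀ v, evalP v χ ∨ (evalP v β → evalP v (.box φ)) → evalP v χ')
    (h : Interp Ax (l ++ [χ, ψ])) : Interp Ax (l ++ [χ']) := by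
  cases hc : Ax.c with
  | true =>
    rw [interp_of_c hc] at *
    have hbox : MThm Ax (.imp (.box ψ) (.imp (.box α) (.box φ))) := .box_mono₂ hc (.taut hψ)
    refine .mp (nest_append_mono (by simp) (by simp) (.of_taut_imp₂ hβ hbox fun v ↦ ?_)) h
    have := hχ v
    simp only [nest, evalP] at this ⊢
    tauto
  | false =>
    rw [interp_of_not_c hc] at *
    obtain ⟨θ, hθ, hthm⟩ := h
    simp only [List.mem_append, List.mem_cons, List.not_mem_nil, or_false] at hθ
    rcases hθ with hθ | rfl | rfl
    · exact ⟨θ, by simp [hθ], hthm⟩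
    · exact ⟨χ', by simp, hthm.of_taut_imp fun v hv ↦ hχ v (.inl hv)⟩
    · have hbox : MThm Ax (.imp (.box α) (.box φ)) := .box_mono (hthm.of_taut_imp hψ)
      exact ⟨χ', by simp, .of_taut_imp₂ hβ hbox fun v hβv hv ↦ hχ v (.inr fun hb ↦ hv (hβv hb))⟩

end Interp

/-- The conjunction of a list of formulas. -/
def Fm.conj (l : List Fm) : Fm := l.foldr .and .top

/-- The disjunction of a list of formulas. -/
def Fm.disj (l : List Fm) : Fm := l.foldr .or .bot

namespace Cmp

/-- The implication `⋀Γ → ⋁Δ` expressed by `Γ ⇒ Δ`. -/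
noncomputable def formula (c : Cmp) : Fm := .imp (.conj c.1.toList) (.disj c.2.toList)

/-- Truth of a component, as a sequent, under an assignment to the atoms. -/
def Holds (v : Fm → Prop) (c : Cmp) : Prop := (∀ A ∈ c.1, evalP v A) → ∃ B ∈ c.2, evalP v B

variable {v : Fm → Prop} {Γ Δ Γ' Δ' : Multiset Fm} {A : Fm}

theorem evalP_formula {c : Cmp} : evalP v c.formula ↔ Holds v c := by
  have evalP_conj (l : List Fm) : evalP v (.conj l) ↔ ∀ A ∈ l, evalP v A := by
    induction l with
    | nil => simp [Fm.conj, evalP]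
    | cons A l ih => simpa [Fm.conj, evalP] using fun _ ↦ ih
  have evalP_disj (l : List Fm) : evalP v (.disj l) ↔ ∃ A ∈ l, evalP v A := by
    induction l with
    | nil => simp [Fm.disj, evalP]
    | cons A l ih => simpa [Fm.disj, evalP] using or_congr_right ih
  simp [formula, Holds, evalP, evalP_conj, evalP_disj]

theorem holds_zero : Holds v (0, 0) ↔ False := by simp [Holds]

theorem holds_cons_left : Holds v (A ::ₘ Γ, Δ) ↔ ¬ evalP v A ∨ Holds v (Γ, Δ) := by
  simp only [Holds, Multiset.forall_mem_cons]
  tauto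

theorem holds_cons_right : Holds v (Γ, A ::ₘ Δ) ↔ evalP v A ∨ Holds v (Γ, Δ) := by
  simp only [Holds, Multiset.mem_cons, exists_eq_or_imp]
  tauto

theorem holds_add : Holds v (Γ + Γ', Δ + Δ') ↔ Holds v (Γ, Δ) ∨ Holds v (Γ', Δ') := by
  simp only [Holds, Multiset.mem_add, or_imp, forall_and, or_and_right, exists_or]
  generalize (∀ A ∈ Γ, evalP v A) = p, (∀ A ∈ Γ', evalP v A) = q
  by_cases hp : p <;> by_cases hq : q <;> simp [hp, hq]

end Cmp

namespace LM

/-- The formula of a component, given the components `L` and the unary nesting that follow it: a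
unary nesting `⫽ᵐ e` contributes the disjunct `□e` to the last component. -/
noncomputable def attach : List Cmp → Option Cmp → Fm → Fm
  | [], some e, φ => .or φ (.box e.formula)
  | _, _, φ => φ

/-- The formulas of the components of a linear nested sequent. -/
noncomputable def formulas : List Cmp → Option Cmp → List Fm
  | [], _ => []
  | c :: L, ep => attach L ep c.formula :: formulas L ep

variable {Ax : MAx} {pre post G L : List Cmp} {ep : Option Cmp} {c c₁ c₂ e : Cmp}

theorem formulas_append_cons : formulas (pre ++ c :: post) ep =
    pre.map Cmp.formula ++ attach post ep c.formula :: formulas post ep := by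
  induction pre with
  | nil => rfl
  | cons c' pre ih =>
    rw [List.cons_append, formulas, ih]
    cases pre <;> rfl

theorem exists_evalP_attach (v : Fm → Prop) (L : List Cmp) (ep : Option Cmp) :
    ∃ p : Prop, ∀ φ, evalP v (attach L ep φ) ↔ evalP v φ ∨ p := by
  rcases L with _ | ⟨c, L⟩
  · rcases ep with _ | e
    · exact ⟨False, fun φ ↦ by simp [attach]⟩
    · exact ⟨v (.box e.formula), fun φ ↦ by simp [attach, evalP]⟩
  · exact ⟨False, fun φ ↦ by simp [attach]⟩

theorem interp_of_holds (hN : Ax.c = true → Ax.n = true ∨ Ax.five = true)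
    (h : ∀ v, Cmp.Holds v c) : Interp Ax (formulas (pre ++ c :: post) ep) := by
  rw [formulas_append_cons]
  refine .of_thm hN (.taut fun v ↦ ?_)
  obtain ⟨p, hp⟩ := exists_evalP_attach v post ep
  exact (hp _).2 (.inl (Cmp.evalP_formula.2 (h v)))

theorem interp_of_holds_imp₂ (h : ∀ v, Cmp.Holds v c₁ → Cmp.Holds v c₂ → Cmp.Holds v c)
    (h₁ : Interp Ax (formulas (pre ++ c₁ :: post) ep))
    (h₂ : Interp Ax (formulas (pre ++ c₂ :: post) ep)) :
    Interp Ax (formulas (pre ++ c :: post) ep) := by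
  rw [formulas_append_cons] at *
  refine .map₂ (.taut fun v ↦ ?_) h₁ h₂
  obtain ⟨p, hp⟩ := exists_evalP_attach v post ep
  have := h v
  simp only [evalP, hp, Cmp.evalP_formula]
  tauto

theorem interp_of_holds_imp (h : ∀ v, Cmp.Holds v c₁ → Cmp.Holds v c) :
    Interp Ax (formulas (pre ++ c₁ :: post) ep) → Interp Ax (formulas (pre ++ c :: post) ep) :=
  fun h₁ ↦ interp_of_holds_imp₂ (fun v hv _ ↦ h v hv) h₁ h₁

theorem formulas_none : formulas (G ++ [c]) none = G.map Cmp.formula ++ [c.formula] :=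
  formulas_append_cons

theorem formulas_some :
    formulas (G ++ [c]) (some e) = G.map Cmp.formula ++ [.or c.formula (.box e.formula)] :=
  formulas_append_cons

theorem formulas_pair :
    formulas (G ++ [c, e]) none = G.map Cmp.formula ++ [c.formula, e.formula] :=
  formulas_append_cons

theorem interp_nestingC (hc : Ax.c = true) (hL : L ≠ []) (h : Interp Ax (formulas L (some e))) :
    Interp Ax (formulas (L ++ [e]) none) := by
  obtain ⟨G, c, rfl⟩ := L.eq_nil_or_concat'.resolve_left hL
  rw [formulas_some, interp_of_c hc] at h
  rw [List.append_assoc, List.singleton_append, formulas_pair, interp_of_c hc]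
  have unnest : MThm Ax (.imp (nest [.or c.formula (.box e.formula)])
      (nest [c.formula, e.formula])) := .taut fun _ ↦ id
  exact .mp (nest_append_mono (by simp) (by simp) unnest) h

/-- The rules `□_L`, `4`, `5` and `N`, read in terms of the formula `α` that they take out of the
last component `e₁` and of its counterpart `β` in the component before it. -/
theorem interp_collapse {α β : Fm} {e₁ : Cmp} (hβ : MThm Ax (.imp β (.box α)))
    (he : ∀ v, Cmp.Holds v e₁ → evalP v α → Cmp.Holds v e)
    (hc : ∀ v, Cmp.Holds v c₁ ∨ ¬ evalP v β → Cmp.Holds v c)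
    (h : Interp Ax (formulas (G ++ [c₁, e₁]) none)) :
    Interp Ax (formulas (G ++ [c]) (some e)) := by
  rw [formulas_pair] at h
  rw [formulas_some]
  refine .collapse (φ := e.formula) hβ (fun v ↦ ?_) (fun v hv ↦ ?_) h
  · simpa only [Cmp.evalP_formula] using he v
  · have := hc v
    simp only [evalP, Cmp.evalP_formula] at hv ⊢
    tauto

theorem interp_box_left {A α : Fm} {Γ Δ Γ' Δ' : Multiset Fm}
    (hα : MThm Ax (.imp (.box A) (.box α)))
    (h : Interp Ax (formulas (G ++ [(Γ, Δ), (α ::ₘ Γ', Δ')]) none)) :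
    Interp Ax (formulas (G ++ [(.box A ::ₘ Γ, Δ)]) (some (Γ', Δ'))) := by
  refine interp_collapse hα (fun v ↦ ?_) (fun v ↦ ?_) h <;>
    simp only [Cmp.holds_cons_left] <;> tauto

theorem interp_nestingN (hN : Ax.n = true ∨ Ax.five = true) (hL : L ≠ [])
    (h : Interp Ax (formulas (L ++ [e]) none)) : Interp Ax (formulas L (some e)) := by
  obtain ⟨G, c, rfl⟩ := L.eq_nil_or_concat'.resolve_left hL
  rw [List.append_assoc] at h
  have box_top : MThm Ax (.imp .top (.box .top)) := (MThm.box_top hN).of_taut_imp fun _ h _ ↦ h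
  exact interp_collapse box_top (fun _ he _ ↦ he) (fun v ↦ by simp [evalP]) h

theorem interp_discard_nesting {α : Fm} (hα : MThm Ax (.imp (.box e.formula) α))
    (hc : ∀ v, Cmp.Holds v c₁ ∨ evalP v α → Cmp.Holds v c)
    (h : Interp Ax (formulas (G ++ [c₁]) (some e))) : Interp Ax (formulas (G ++ [c]) none) := by
  rw [formulas_some] at h
  rw [formulas_none]
  refine .map (hα.of_taut_imp fun v hv ↦ ?_) h
  have := hc v
  simp only [evalP, Cmp.evalP_formula] at hv ⊢
  tauto

open Cmp in
theorem sound (hN : Ax.c = true → Ax.n = true ∨ Ax.five = true) {s : LNSm} (h : LM Ax s) :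
    Interp Ax (formulas s.1 s.2) := by
  induction h with
  | init | botL | topR =>
    refine interp_of_holds hN fun v ↦ ?_
    simp only [holds_cons_left, holds_cons_right, evalP]
    tauto
  | negL _ ih | negR _ ih | andL _ ih | orR _ ih | impR _ ih | wkL _ ih | wkR _ ih | conL _ ih
  | conR _ ih =>
    refine interp_of_holds_imp (fun v ↦ ?_) ih
    simp only [holds_cons_left, holds_cons_right, evalP]
    tauto
  | andR _ _ ih₁ ih₂ | orL _ _ ih₁ ih₂ | impL _ _ ih₁ ih₂ =>
    refine interp_of_holds_imp₂ (fun v ↦ ?_) ih₁ ih₂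
    simp only [holds_cons_left, holds_cons_right, evalP]
    tauto
  | @boxRm G Γ Δ B _ ih =>
    refine interp_discard_nesting (α := .box B) (.box_mono (.taut fun v ↦ ?_)) (fun v ↦ ?_) ih
    · simp [evalP, evalP_formula, Holds]
    · simp only [holds_cons_right]; tauto
  | boxLm _ ih => exact interp_box_left (.taut fun _ ↦ id) ih
  | rule4 h4 _ ih => exact interp_box_left (.ax4 h4) ih
  | @rule5 G Γ Δ Sg Pp A h5 _ ih =>
    refine interp_collapse (.neg_box_imp_box (A := A) h5) (fun v ↦ ?_) (fun v ↦ ?_) ih <;>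
      simp only [holds_cons_right, evalP] <;> tauto
  | ruleN hn _ ih => exact interp_nestingN hn (List.cons_ne_nil _ _) ih
  | ruleC hc _ ih => exact interp_nestingC hc (List.cons_ne_nil _ _) ih
  | ruleP hp _ ih =>
    have refute : MThm Ax (.neg (formula (0, 0))) :=
      .taut fun v ↦ by simp [evalP, evalP_formula, holds_zero]
    exact interp_discard_nesting ((refute.neg_box hp).of_taut_imp (B := .imp _ .bot) fun _ ↦ id)
      (fun v ↦ by simp [evalP]) ih
  | @ruleD G Γ Δ A hd _ ih =>
    have refute : MThm Ax (.imp (formula ({A}, 0)) (.neg A)) :=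
      .taut fun v ↦ by simp [evalP, evalP_formula, Holds]
    refine interp_discard_nesting (refute.box_imp_neg_box hd) (fun v ↦ ?_) ih
    simp only [holds_cons_left, evalP]
    tauto
  | ruleT ht _ ih =>
    refine interp_discard_nesting (.axT ht) (fun v ↦ ?_) ih
    rw [evalP_formula, holds_add]
    exact id

end LM

theorem LNSm_five_sound_complete_general (Ax : MAx) (h5 : Ax.five = true) (ht : Ax.t = false)
    (hc : Ax.c = true → Ax.four = true) (hd : Ax.d = true → Ax.four = true) (A : Fm) :
    MThm Ax A ↔ LM Ax ([(0, {A})], none) := by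
  constructor
  · intro h
    exact (h.refutable hc hd ht).derivable h5 [] (0, {A}) (by simp [Cmp.signed])
  · intro h
    have hA : MThm Ax (Cmp.formula (0, {A})) := by
      simpa [Interp, nest, LM.formulas, LM.attach] using h.sound fun _ ↦ .inr h5
    exact hA.of_taut_imp fun v ↦ by simp [Cmp.evalP_formula, Cmp.Holds]

/-- Soundness and completeness of the linear nested sequent calculus
`LNS_LConW` for each of the logics `L ∈ {M5, MP5, M45, MP45, MD45, K45,
KD45}`: `A ∈ L` iff the linear nested sequent `⇒ A` is derivable in
`LNS_LConW`. -/
theorem LNSm_five_sound_complete :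
    ∀ Ax ∈ [axM5, axMP5, axM45, axMP45, axMD45, axK45, axKD45],
      ∀ A : Fm, MThm Ax A ↔ LM Ax ([(0, {A})], none) := by
  intro Ax hAx A
  fin_cases hAx <;> exact LNSm_five_sound_complete_general _ rfl rfl (by decide) (by decide) A
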